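/- There exists a constant C > 0 such that for all sufficiently large real x, writing y = log log x, the number of primes p ≤ x for which ω_y(p²−1) does not lie in the interval [1.5·log log y, 2.5·log log y] is at most C · π(x) / (log log y). In particular this count is o(π(x)). -/

import Mathlib

open Filter Topology

/-- `omegay y n` is the number of distinct prime divisors `q ≤ y` of `n`. -/
noncomputable def omegay (y : ℝ) (n : ℕ) : ℕ :=
  (n.primeFactors.filter (fun q : ℕ => (q : ℝ) ≤ y)).card

/-!
Let `P` be the product of the primes `q ≤ y`. A prime `p` not dividing `P` satisfies `q ∣ p² - 1`
exactly when `p ≡ ±1` modulo `q`, and by the Chinese remainder theorem these conditions are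
independent for a uniformly random unit modulo `P`. The number of them that hold then has mean
`2 log log y + O(1)`, by Mertens, and variance at most its mean, so Chebyshev's inequality makes a
deviation of `¼ log log y` occur with probability `O(1 / log log y)`. Passing from residue classes
to primes only needs an upper bound for the primes in each class, and Selberg's sieve provides the
right order of magnitude `x / (φ(P) log x)` because `P = exp (O(y)) = (log x)^O(1)` when
`y ≤ log log x`.
-/

section SelbergWeights

open Finset
open BoundingSieve
open scoped ArithmeticFunction.Moebius

lemma filter_dvd_divisors_mul {l m : ℕ} (hl : l ≠ 0) :
    {d ∈ (l * m).divisors | l ∣ d} = m.divisors.image (l * ·) := by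
  ext d
  simp only [mem_filter, Nat.mem_divisors, mem_image, mul_ne_zero_iff]
  constructor
  · rintro ⟨⟨hdvd, -, hm⟩, e, rfl⟩
    exact ⟨e, ⟨Nat.dvd_of_mul_dvd_mul_left (Nat.pos_of_ne_zero hl) hdvd, hm⟩, rfl⟩
  · rintro ⟨e, ⟨hdvd, hm⟩, rfl⟩
    exact ⟨⟨Nat.mul_dvd_mul_left l hdvd, hl, hm⟩, Dvd.intro e rfl⟩

lemma sum_moebius_divisors_filter_dvd {k l : ℕ} (hk : Squarefree k) (hl : l ∣ k) :
    ∑ d ∈ k.divisors with l ∣ d, μ d = if k = l then μ l else 0 := by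
  obtain ⟨m, rfl⟩ := hl
  have hl : l ≠ 0 := left_ne_zero_of_mul hk.ne_zero
  have hcop : l.Coprime m := Nat.coprime_of_squarefree_mul hk
  have hmul : ∀ e ∈ m.divisors, μ (l * e) = μ l * μ e := fun e he =>
    ArithmeticFunction.isMultiplicative_moebius.map_mul_of_coprime
      (hcop.coprime_dvd_right (Nat.dvd_of_mem_divisors he))
  rw [filter_dvd_divisors_mul hl, sum_image (mul_right_injective₀ hl).injOn, sum_congr rfl hmul,
    ← mul_sum, ← ArithmeticFunction.coe_mul_zeta_apply, ArithmeticFunction.moebius_mul_coe_zeta,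
    ArithmeticFunction.one_apply]
  simp [hl]

lemma sum_abs_lambdaSquared_le (w : ℕ → ℝ) (n : ℕ) :
    ∑ d ∈ n.divisors, |lambdaSquared w d| ≤ (∑ d ∈ n.divisors, |w d|) ^ 2 := by
  have hterm : ∀ d ∈ n.divisors, |lambdaSquared w d| ≤
      ∑ d₁ ∈ n.divisors, ∑ d₂ ∈ n.divisors, if d = d₁.lcm d₂ then |w d₁| * |w d₂| else 0 := by
    intro d hd
    have hsub : d.divisors ⊆ n.divisors :=
      Nat.divisors_subset_of_dvd (Nat.mem_divisors.1 hd).2 (Nat.dvd_of_mem_divisors hd)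
    calc |lambdaSquared w d|
        ≤ ∑ d₁ ∈ d.divisors, ∑ d₂ ∈ d.divisors,
            |if d = d₁.lcm d₂ then w d₁ * w d₂ else 0| :=
          (abs_sum_le_sum_abs _ _).trans (sum_le_sum fun _ _ => abs_sum_le_sum_abs _ _)
      _ = ∑ d₁ ∈ d.divisors, ∑ d₂ ∈ d.divisors,
            if d = d₁.lcm d₂ then |w d₁| * |w d₂| else 0 := by
          simp only [apply_ite abs, abs_mul, abs_zero]
      _ ≤ _ := by
          refine (sum_le_sum fun _ _ => sum_le_sum_of_subset_of_nonneg hsub ?_).trans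
            (sum_le_sum_of_subset_of_nonneg hsub ?_)
          all_goals intros; positivity
  refine (sum_le_sum hterm).trans ?_
  rw [sum_comm, sq, sum_mul_sum]
  refine sum_le_sum fun d₁ _ => ?_
  rw [sum_comm]
  refine sum_le_sum fun d₂ _ => ?_
  rw [sum_ite_eq']
  split_ifs
  exacts [le_rfl, by positivity]

lemma errSum_le_mul_sum_abs {s : BoundingSieve} {B : ℝ} {v : ℕ → ℝ}
    (hrem : ∀ d, d ∣ s.prodPrimes → |s.rem d| ≤ B) :
    s.errSum v ≤ B * ∑ d ∈ s.prodPrimes.divisors, |v d| := by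
  rw [errSum, mul_sum]
  refine sum_le_sum fun d hd => ?_
  rw [mul_comm]
  exact mul_le_mul_of_nonneg_right (hrem d (Nat.dvd_of_mem_divisors hd)) (abs_nonneg _)

/-- The divisors over which the optimal weights of Selberg's sieve are supported: the divisors of
the sifting product that are at most the square root of the level. -/
noncomputable def selbergDivisors (s : SelbergSieve) : Finset ℕ :=
  {d ∈ s.prodPrimes.divisors | (d : ℝ) ^ 2 ≤ s.level}

/-- The sum `S` of the Selberg terms, whose inverse is the optimal main term of the sieve. -/
noncomputable def selbergSum (s : SelbergSieve) : ℝ :=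
  ∑ l ∈ selbergDivisors s, s.selbergTerms l

/-- Selberg's optimal weights `λ_d`, for which the quadratic form `mainSum (lambdaSquared ·)` is
minimal subject to `λ₁ = 1` and `λ_d = 0` for `d² > level`. -/
noncomputable def selbergWeight (s : SelbergSieve) (d : ℕ) : ℝ :=
  μ d / s.nu d * (∑ k ∈ selbergDivisors s with d ∣ k, s.selbergTerms k) / selbergSum s

variable {s : SelbergSieve} {d k l : ℕ}

lemma dvd_prodPrimes_of_mem_selbergDivisors (hk : k ∈ selbergDivisors s) : k ∣ s.prodPrimes :=
  Nat.dvd_of_mem_divisors (mem_filter.1 hk).1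

lemma mem_selbergDivisors_of_dvd (hk : k ∈ selbergDivisors s) (hd : d ∣ k) :
    d ∈ selbergDivisors s := by
  have hkP := dvd_prodPrimes_of_mem_selbergDivisors hk
  have hdk : d ≤ k := Nat.le_of_dvd (Nat.pos_of_dvd_of_pos hkP prodPrimes_ne_zero.bot_lt) hd
  refine mem_filter.2 ⟨Nat.mem_divisors.2 ⟨hd.trans hkP, prodPrimes_ne_zero⟩, ?_⟩
  exact (by gcongr : (d : ℝ) ^ 2 ≤ (k : ℝ) ^ 2).trans (mem_filter.1 hk).2

lemma one_mem_selbergDivisors : 1 ∈ selbergDivisors s := by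
  simp [selbergDivisors, prodPrimes_ne_zero, s.one_le_level]

lemma selbergTerms_pos_of_mem (hk : k ∈ selbergDivisors s) : 0 < s.selbergTerms k :=
  selbergTerms_pos (dvd_prodPrimes_of_mem_selbergDivisors hk)

lemma selbergSum_pos : 0 < selbergSum s :=
  sum_pos (fun _ => selbergTerms_pos_of_mem) ⟨1, one_mem_selbergDivisors⟩

lemma selbergWeight_one : selbergWeight s 1 = 1 := by
  simp only [selbergWeight, one_dvd, filter_true, ArithmeticFunction.moebius_apply_one,
    s.nu_mult.map_one, Int.cast_one, div_one, one_mul]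
  exact div_self selbergSum_pos.ne'

lemma selbergWeight_eq_zero (hd : d ∉ selbergDivisors s) : selbergWeight s d = 0 := by
  have hempty : {k ∈ selbergDivisors s | d ∣ k} = ∅ :=
    filter_eq_empty_iff.2 fun _ hk hdk => hd (mem_selbergDivisors_of_dvd hk hdk)
  simp [selbergWeight, hempty]

lemma abs_selbergWeight_le (hd : d ∣ s.prodPrimes) : |selbergWeight s d| ≤ (s.nu d)⁻¹ := by
  have hν : 0 < s.nu d := nu_pos_of_dvd_prodPrimes hd
  have hμ : |(μ d : ℝ)| ≤ 1 := by exact_mod_cast ArithmeticFunction.abs_moebius_le_one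
  have hpos : 0 ≤ ∑ k ∈ selbergDivisors s with d ∣ k, s.selbergTerms k :=
    sum_nonneg fun k hk => (selbergTerms_pos_of_mem (mem_filter.1 hk).1).le
  have hle : ∑ k ∈ selbergDivisors s with d ∣ k, s.selbergTerms k ≤ selbergSum s :=
    sum_le_sum_of_subset_of_nonneg (filter_subset _ _) fun k hk _ =>
      (selbergTerms_pos_of_mem hk).le
  rw [selbergWeight, mul_div_assoc, abs_mul, abs_div, abs_of_pos hν,
    abs_of_nonneg (div_nonneg hpos selbergSum_pos.le)]
  calc |(μ d : ℝ)| / s.nu d * (_ / selbergSum s) ≤ 1 / s.nu d * 1 := by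
        gcongr
        · exact div_nonneg hpos selbergSum_pos.le
        · exact div_le_one_of_le₀ hle selbergSum_pos.le
    _ = (s.nu d)⁻¹ := by rw [mul_one, one_div]

lemma sum_abs_selbergWeight_le :
    ∑ d ∈ s.prodPrimes.divisors, |selbergWeight s d| ≤ ∑ d ∈ selbergDivisors s, (s.nu d)⁻¹ := by
  have hsupp : ∑ d ∈ s.prodPrimes.divisors, |selbergWeight s d| =
      ∑ d ∈ selbergDivisors s, |selbergWeight s d| :=
    (sum_subset (filter_subset _ _) fun d _ hd => by rw [selbergWeight_eq_zero hd, abs_zero]).symm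
  rw [hsupp]
  exact sum_le_sum fun d hd => abs_selbergWeight_le (dvd_prodPrimes_of_mem_selbergDivisors hd)

/-- Möbius inversion: the weights diagonalize the quadratic form of the sieve. -/
lemma sum_nu_mul_selbergWeight (l : ℕ) :
    (∑ d ∈ s.prodPrimes.divisors, if l ∣ d then s.nu d * selbergWeight s d else 0) =
      if l ∈ selbergDivisors s then μ l * s.selbergTerms l / selbergSum s else 0 := by
  have hterm : ∀ d ∈ s.prodPrimes.divisors, s.nu d * selbergWeight s d =
      ∑ k ∈ selbergDivisors s, if d ∣ k then μ d * s.selbergTerms k / selbergSum s else 0 := by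
    intro d hd
    have hν : s.nu d ≠ 0 := nu_ne_zero (Nat.dvd_of_mem_divisors hd)
    rw [← sum_filter, ← sum_div, ← mul_sum, selbergWeight]
    field_simp
  have hinner : ∀ k ∈ selbergDivisors s,
      ∑ d ∈ s.prodPrimes.divisors with l ∣ d,
        (if d ∣ k then μ d * s.selbergTerms k / selbergSum s else 0) =
      if k = l then μ l * s.selbergTerms l / selbergSum s else 0 := by
    intro k hk
    have hkP := dvd_prodPrimes_of_mem_selbergDivisors hk
    rw [← sum_filter, filter_comm, Nat.divisors_filter_dvd_of_dvd prodPrimes_ne_zero hkP,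
      ← sum_div, ← sum_mul]
    by_cases hlk : l ∣ k
    · have hmoebius := sum_moebius_divisors_filter_dvd (squarefree_of_dvd_prodPrimes hkP) hlk
      rw [← Int.cast_sum, hmoebius]
      split_ifs with h <;> simp [h]
    · have hempty : {d ∈ k.divisors | l ∣ d} = ∅ :=
        filter_eq_empty_iff.2 fun d hd hld => hlk (hld.trans (Nat.dvd_of_mem_divisors hd))
      rw [hempty, if_neg fun h => hlk h.symm.dvd]
      simp
  rw [← sum_filter, sum_congr rfl fun d hd => hterm d (mem_filter.1 hd).1, sum_comm,
    sum_congr rfl hinner, sum_ite_eq']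

lemma mainSum_lambdaSquared_selbergWeight :
    s.mainSum (lambdaSquared (selbergWeight s)) = (selbergSum s)⁻¹ := by
  have hterm : ∀ l ∈ selbergDivisors s,
      (s.selbergTerms l)⁻¹ * (μ l * s.selbergTerms l / selbergSum s) ^ 2 =
        s.selbergTerms l / selbergSum s ^ 2 := by
    intro l hl
    have hμ : (μ l : ℝ) ^ 2 = 1 := by
      exact_mod_cast ArithmeticFunction.moebius_sq_eq_one_of_squarefree
        (squarefree_of_dvd_prodPrimes (dvd_prodPrimes_of_mem_selbergDivisors hl))
    have hg := (selbergTerms_pos_of_mem hl).ne'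
    rw [div_pow, mul_pow, hμ]
    field_simp
  simp only [mainSum_lambdaSquared_eq_sum_mul_sum_sq, sum_nu_mul_selbergWeight, ite_pow,
    zero_pow two_ne_zero, mul_ite, mul_zero]
  have hsub : selbergDivisors s ⊆ s.prodPrimes.divisors := filter_subset _ _
  rw [← sum_filter, filter_mem_eq_inter, inter_eq_right.2 hsub,
    sum_congr rfl hterm, ← sum_div, ← selbergSum, sq, div_self_mul_self']

theorem siftedSum_le_totalMass_div_selbergSum {B : ℝ}
    (hrem : ∀ d, d ∣ s.prodPrimes → |s.rem d| ≤ B) :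
    s.siftedSum ≤
      s.totalMass / selbergSum s + B * (∑ d ∈ selbergDivisors s, (s.nu d)⁻¹) ^ 2 := by
  have hB : 0 ≤ B := (abs_nonneg _).trans (hrem 1 (one_dvd _))
  have herr : s.errSum (lambdaSquared (selbergWeight s)) ≤
      B * (∑ d ∈ selbergDivisors s, (s.nu d)⁻¹) ^ 2 := by
    grw [errSum_le_mul_sum_abs hrem, sum_abs_lambdaSquared_le, sum_abs_selbergWeight_le]
  have hsieve := s.siftedSum_le_mainSum_errSum_of_upperMoebius _
    (upperMoebius_lambdaSquared (selbergWeight s) selbergWeight_one)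
  rw [mainSum_lambdaSquared_selbergWeight, ← div_eq_mul_inv] at hsieve
  exact hsieve.trans (by gcongr)

end SelbergWeights

section TotientSums

open Finset

lemma natCast_totient_eq_mul_prod (n : ℕ) :
    (n.totient : ℝ) = n * ∏ p ∈ n.primeFactors, (1 - (p : ℝ)⁻¹) := by
  simpa using congrArg (Rat.cast : ℚ → ℝ) n.totient_eq_mul_prod_factors

lemma prod_primeFactors_inv_one_sub_inv {n : ℕ} (hn : n ≠ 0) :
    ∏ p ∈ n.primeFactors, (1 - (p : ℝ)⁻¹)⁻¹ = n / n.totient := by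
  rw [prod_inv_distrib, natCast_totient_eq_mul_prod, div_mul_cancel_left₀ (by exact_mod_cast hn)]

/-- The right-hand side is the Euler product over the primes dividing `n`. -/
lemma sum_inv_le_div_totient {n : ℕ} (hn : n ≠ 0) {t : Finset ℕ}
    (ht : ∀ m ∈ t, m ≠ 0 ∧ m.primeFactors ⊆ n.primeFactors) :
    ∑ m ∈ t, (m : ℝ)⁻¹ ≤ n / n.totient := by
  let invHom : ℕ →* ℝ := ⟨⟨fun m => (m : ℝ)⁻¹, by simp⟩, by simp [mul_comm]⟩
  have hinv : ∀ {p : ℕ}, p.Prime → ‖invHom p‖ < 1 := fun {p} hp => by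
    simpa [invHom] using inv_lt_one_of_one_lt₀ (Nat.one_lt_cast.2 hp.one_lt : (1 : ℝ) < p)
  have hsum := (EulerProduct.summable_and_hasSum_factoredNumbers_prod_filter_prime_geometric hinv
    n.primeFactors).2
  have hprod : ∏ p ∈ n.primeFactors with p.Prime, (1 - invHom p)⁻¹ = n / n.totient := by
    rw [filter_true_of_mem fun p => Nat.prime_of_mem_primeFactors]
    exact prod_primeFactors_inv_one_sub_inv hn
  have hmem : ∀ m ∈ t, m ∈ Nat.factoredNumbers n.primeFactors := fun m hm =>
    Nat.mem_factoredNumbers_of_primeFactors_subset (ht m hm).1 (ht m hm).2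
  rw [hprod] at hsum
  rw [← sum_subtype_of_mem (fun m : ℕ => (m : ℝ)⁻¹) hmem]
  exact sum_le_hasSum _ (fun m _ => inv_nonneg.2 (Nat.cast_nonneg (m : ℕ))) hsum

/-- The squarefree integers `1 ≤ k ≤ R` coprime to `D`; they index the Selberg sum of a sieve in a
progression modulo `D`. -/
def squarefreeCoprime (D R : ℕ) : Finset ℕ :=
  {k ∈ Icc 1 R | Squarefree k ∧ k.Coprime D}

/-- The product of the primes dividing `n` but not `D`: the part of the radical of `n` coprime to
`D`, and for `n` a primorial the sifting product of a sieve in a progression modulo `D`. -/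
def radicalCoprime (D n : ℕ) : ℕ :=
  ∏ p ∈ n.primeFactors with ¬ p ∣ D, p

variable {D R n : ℕ}

lemma radicalCoprime_dvd : radicalCoprime D n ∣ n :=
  (prod_dvd_prod_of_subset _ _ _ (filter_subset _ _)).trans n.prod_primeFactors_dvd

lemma primeFactors_radicalCoprime :
    (radicalCoprime D n).primeFactors = {p ∈ n.primeFactors | ¬ p ∣ D} :=
  Nat.primeFactors_prod fun _ hp => Nat.prime_of_mem_primeFactors (mem_filter.1 hp).1

lemma squarefree_radicalCoprime : Squarefree (radicalCoprime D n) := by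
  have hprime : ∀ p ∈ n.primeFactors.filter (¬ · ∣ D), p.Prime := fun p hp =>
    Nat.prime_of_mem_primeFactors (mem_filter.1 hp).1
  exact squarefree_prod_of_pairwise_isCoprime
    (fun p hp q hq hpq => Nat.coprime_iff_isRelPrime.1
      ((Nat.coprime_primes (hprime p hp) (hprime q hq)).2 hpq))
    fun p hp => (hprime p hp).prime.squarefree

lemma coprime_radicalCoprime : (radicalCoprime D n).Coprime D :=
  Nat.Coprime.prod_left fun _ hp =>
    (Nat.prime_of_mem_primeFactors (mem_filter.1 hp).1).coprime_iff_not_dvd.2 (mem_filter.1 hp).2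

lemma radicalCoprime_mem_squarefreeCoprime (hn : n ∈ Icc 1 R) :
    radicalCoprime D n ∈ squarefreeCoprime D R := by
  rw [mem_Icc] at hn
  exact mem_filter.2 ⟨mem_Icc.2 ⟨squarefree_radicalCoprime.ne_zero.bot_lt,
    (Nat.le_of_dvd hn.1 radicalCoprime_dvd).trans hn.2⟩,
    squarefree_radicalCoprime, coprime_radicalCoprime⟩

lemma sum_inv_radicalCoprime_eq_le {k : ℕ} (hD : D ≠ 0) (hk : k ∈ squarefreeCoprime D R) :
    ∑ n ∈ Icc 1 R with radicalCoprime D n = k, (n : ℝ)⁻¹ ≤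
      D / D.totient * (k.totient : ℝ)⁻¹ := by
  have hk0 : k ≠ 0 := (Nat.one_le_iff_ne_zero.1 (mem_Icc.1 (mem_filter.1 hk).1).1)
  have hcop : k.Coprime D := (mem_filter.1 hk).2.2
  set t : Finset ℕ := {n ∈ Icc 1 R | radicalCoprime D n = k}
  have hdvd : ∀ n ∈ t, k ∣ n := fun n hn => (mem_filter.1 hn).2 ▸ radicalCoprime_dvd
  have hinj : Set.InjOn (· / k) t := fun m hm n hn hmn =>
    (Nat.div_left_inj (hdvd m hm) (hdvd n hn)).1 hmn
  have hquot : ∀ m ∈ t.image (· / k), m ≠ 0 ∧ m.primeFactors ⊆ (k * D).primeFactors := by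
    simp only [mem_image, forall_exists_index, and_imp, forall_apply_eq_imp_iff₂]
    intro n hn
    have hn0 : n ≠ 0 := (Nat.one_le_iff_ne_zero.1 (mem_Icc.1 (mem_filter.1 hn).1).1)
    refine ⟨(Nat.div_pos (Nat.le_of_dvd hn0.bot_lt (hdvd n hn)) hk0.bot_lt).ne', fun p hp => ?_⟩
    have hpn := Nat.primeFactors_mono (Nat.div_dvd_of_dvd (hdvd n hn)) hn0 hp
    rw [Nat.primeFactors_mul hk0 hD, ← (mem_filter.1 hn).2, primeFactors_radicalCoprime]
    have hpp := Nat.prime_of_mem_primeFactors hpn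
    by_cases hpD : p ∣ D <;> simp_all
  calc ∑ n ∈ t, (n : ℝ)⁻¹ = (k : ℝ)⁻¹ * ∑ m ∈ t.image (· / k), (m : ℝ)⁻¹ := by
        rw [sum_image hinj, mul_sum]
        refine sum_congr rfl fun n hn => ?_
        rw [← mul_inv, ← Nat.cast_mul, Nat.mul_div_cancel' (hdvd n hn)]
    _ ≤ (k : ℝ)⁻¹ * ((k * D : ℕ) / (k * D).totient) := by
        gcongr
        exact sum_inv_le_div_totient (mul_ne_zero hk0 hD) hquot
    _ = D / D.totient * (k.totient : ℝ)⁻¹ := by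
        rw [Nat.totient_mul hcop]
        push_cast
        field_simp

lemma log_le_sum_Icc_inv (N : ℕ) : Real.log N ≤ ∑ n ∈ Icc 1 N, (n : ℝ)⁻¹ := by
  simpa [harmonic_eq_sum_Icc] using log_le_harmonic_floor (N : ℝ) N.cast_nonneg

/-- Group `n ≤ R` according to the part of its radical that is coprime to `D`. -/
theorem log_le_mul_sum_inv_totient (hD : D ≠ 0) (R : ℕ) :
    Real.log R ≤ D / D.totient * ∑ k ∈ squarefreeCoprime D R, (k.totient : ℝ)⁻¹ := by
  calc Real.log R ≤ ∑ n ∈ Icc 1 R, (n : ℝ)⁻¹ := log_le_sum_Icc_inv R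
    _ = ∑ k ∈ squarefreeCoprime D R, ∑ n ∈ Icc 1 R with radicalCoprime D n = k, (n : ℝ)⁻¹ :=
        (sum_fiberwise_of_maps_to (fun n => radicalCoprime_mem_squarefreeCoprime) _).symm
    _ ≤ _ := by
        rw [mul_sum]
        exact sum_le_sum fun k hk => sum_inv_radicalCoprime_eq_le hD hk

end TotientSums

section PrimesInProgressions

open Finset

lemma abs_card_Ioc_modEq_sub_div_le_one {r : ℕ} (hr : 0 < r) (N a : ℕ) :
    |(#{n ∈ Ioc 0 N | n ≡ a [MOD r]} : ℝ) - N / r| ≤ 1 := by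
  have : (0 : ℚ) < r := by exact_mod_cast hr
  have hmono : ⌊((0 : ℕ) - a : ℚ) / r⌋ ≤ ⌊(N - a : ℚ) / r⌋ := by
    apply Int.floor_le_floor
    gcongr
    exact N.zero_le
  have hcard := Nat.Ioc_filter_modEq_card 0 N hr a
  rw [max_eq_left (sub_nonneg.2 hmono)] at hcard
  have hdiff : (N - a : ℚ) / r - ((0 : ℕ) - a) / r = N / r := by push_cast; ring
  have hQ : |(#{n ∈ Ioc 0 N | n ≡ a [MOD r]} : ℚ) - N / r| ≤ 1 := by
    rw [← Int.cast_natCast (#_), hcard, ← hdiff, abs_le]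
    push_cast
    constructor <;>
      linarith [Int.floor_le ((N - a : ℚ) / r), Int.lt_floor_add_one ((N - a : ℚ) / r),
        Int.floor_le (((0 : ℕ) - a : ℚ) / r), Int.lt_floor_add_one (((0 : ℕ) - a : ℚ) / r)]
  simpa using (Rat.cast_le (K := ℝ)).2 hQ

lemma abs_card_modEq_and_dvd_sub_le_one {D m : ℕ} (hD : 0 < D) (hm : 0 < m) (h : m.Coprime D)
    (N a : ℕ) : |(#{n ∈ Ioc 0 N | n ≡ a [MOD D] ∧ m ∣ n} : ℝ) - N / (D * m)| ≤ 1 := by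
  obtain ⟨c, hcD, hcm⟩ := Nat.chineseRemainder h.symm a 0
  have hfilter : {n ∈ Ioc 0 N | n ≡ a [MOD D] ∧ m ∣ n} = {n ∈ Ioc 0 N | n ≡ c [MOD D * m]} := by
    refine filter_congr fun n _ => ?_
    rw [← Nat.modEq_and_modEq_iff_modEq_mul h.symm, ← Nat.modEq_zero_iff_dvd]
    exact and_congr ⟨fun hn => hn.trans hcD.symm, fun hn => hn.trans hcD⟩
      ⟨fun hn => hn.trans hcm.symm, fun hn => hn.trans hcm⟩
  rw [hfilter, ← Nat.cast_mul]
  exact abs_card_Ioc_modEq_sub_div_le_one (Nat.mul_pos hD hm) N c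

open BoundingSieve

/-- Selberg's sieve of level `R²` for the integers `0 < n ≤ N` congruent to `a` modulo `D`, sifted
by the primes `p ≤ R` not dividing `D`. -/
noncomputable def progressionSieve (D a N : ℕ) {R : ℕ} (hR : 1 ≤ R) : SelbergSieve where
  support := {n ∈ Ioc 0 N | n ≡ a [MOD D]}
  prodPrimes := radicalCoprime D (primorial R)
  prodPrimes_squarefree := squarefree_radicalCoprime
  weights _ := 1
  weights_nonneg _ := zero_le_one
  totalMass := N / D
  nu := ⟨fun n => (n : ℝ)⁻¹, by simp⟩
  nu_mult := ⟨by simp, by simp [mul_comm]⟩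
  nu_pos_of_prime _ hp _ := inv_pos.2 (Nat.cast_pos.2 hp.pos)
  nu_lt_one_of_prime _ hp _ := inv_lt_one_of_one_lt₀ (Nat.one_lt_cast.2 hp.one_lt)
  level := (R : ℝ) ^ 2
  one_le_level := one_le_pow₀ (Nat.one_le_cast.2 hR)

variable {D a N R : ℕ} {hR : 1 ≤ R}

lemma selbergTerms_progressionSieve (l : ℕ) :
    (progressionSieve D a N hR).selbergTerms l = (l.totient : ℝ)⁻¹ := by
  rw [selbergTerms_apply, natCast_totient_eq_mul_prod, mul_inv, ← prod_inv_distrib]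
  rfl

lemma dvd_radicalCoprime_primorial_iff {l : ℕ} (hl : l ≤ R) :
    l ∣ radicalCoprime D (primorial R) ↔ Squarefree l ∧ l.Coprime D := by
  refine ⟨fun h => ⟨squarefree_radicalCoprime.squarefree_of_dvd h,
    coprime_radicalCoprime.coprime_dvd_left h⟩, fun ⟨hsq, hcop⟩ => ?_⟩
  rw [← Nat.prod_primeFactors_of_squarefree hsq]
  refine prod_dvd_prod_of_subset _ _ _ fun p hp => mem_filter.2 ⟨?_, fun hpD => ?_⟩
  · rw [primeFactors_primorial, Nat.mem_primesLE]
    exact ⟨(Nat.le_of_mem_primeFactors hp).trans hl, Nat.prime_of_mem_primeFactors hp⟩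
  · exact Nat.not_coprime_of_dvd_of_dvd (Nat.prime_of_mem_primeFactors hp).one_lt
      (Nat.dvd_of_mem_primeFactors hp) hpD hcop

lemma selbergDivisors_progressionSieve :
    selbergDivisors (progressionSieve D a N hR) = squarefreeCoprime D R := by
  ext l
  have hlevel : (l : ℝ) ^ 2 ≤ (R : ℝ) ^ 2 ↔ l ≤ R := by
    rw [pow_le_pow_iff_left₀ (Nat.cast_nonneg l) (Nat.cast_nonneg R) two_ne_zero, Nat.cast_le]
  have hP : radicalCoprime D (primorial R) ≠ 0 := squarefree_radicalCoprime.ne_zero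
  rw [selbergDivisors, squarefreeCoprime, mem_filter, mem_filter, Nat.mem_divisors, mem_Icc]
  change (l ∣ radicalCoprime D (primorial R) ∧ _) ∧ (l : ℝ) ^ 2 ≤ (R : ℝ) ^ 2 ↔ _
  rw [hlevel]
  constructor
  · rintro ⟨⟨hdvd, -⟩, hlR⟩
    exact ⟨⟨Nat.pos_of_dvd_of_pos hdvd hP.bot_lt, hlR⟩,
      (dvd_radicalCoprime_primorial_iff hlR).1 hdvd⟩
  · rintro ⟨⟨-, hlR⟩, hl⟩
    exact ⟨⟨(dvd_radicalCoprime_primorial_iff hlR).2 hl, hP⟩, hlR⟩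

lemma abs_rem_progressionSieve_le_one (hD : D ≠ 0) {d : ℕ}
    (hd : d ∣ (progressionSieve D a N hR).prodPrimes) :
    |(progressionSieve D a N hR).rem d| ≤ 1 := by
  have hd0 : 0 < d := Nat.pos_of_dvd_of_pos hd prodPrimes_ne_zero.bot_lt
  have hcount := abs_card_modEq_and_dvd_sub_le_one hD.bot_lt hd0
    (coprime_radicalCoprime.coprime_dvd_left hd) N a
  simp only [rem, multSum]
  convert hcount using 2
  simp only [progressionSieve, ← sum_filter, filter_filter, sum_const, nsmul_one,
    ArithmeticFunction.coe_mk]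
  ring

lemma card_primes_le_siftedSum :
    (#{p ∈ Ioc R N | p.Prime ∧ p ≡ a [MOD D]} : ℝ) ≤ (progressionSieve D a N hR).siftedSum := by
  have hsum : (progressionSieve D a N hR).siftedSum =
      #{n ∈ Ioc 0 N | n ≡ a [MOD D] ∧ (radicalCoprime D (primorial R)).Coprime n} := by
    rw [siftedSum, ← filter_filter, card_filter]
    push_cast
    rfl
  rw [hsum]
  gcongr
  intro p hp
  simp only [mem_filter, mem_Ioc] at hp ⊢
  obtain ⟨⟨hRp, hpN⟩, hprime, hmod⟩ := hp
  refine ⟨⟨hprime.pos, hpN⟩, hmod, Nat.Coprime.coprime_dvd_left radicalCoprime_dvd ?_⟩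
  exact (hprime.coprime_iff_not_dvd.2 fun h => hRp.not_ge (hprime.dvd_primorial_iff.1 h)).symm

theorem card_primes_modEq_le (hD : D ≠ 0) (a N : ℕ) (hR : 1 < R) :
    (#{p ∈ Ioc R N | p.Prime ∧ p ≡ a [MOD D]} : ℝ) ≤
      N / (D.totient * Real.log R) + (R : ℝ) ^ 4 := by
  set s := progressionSieve D a N hR.le
  have hlog : 0 < Real.log R := Real.log_pos (by exact_mod_cast hR)
  have hφ : (0 : ℝ) < D.totient := by exact_mod_cast Nat.totient_pos.2 hD.bot_lt
  have hmain : s.totalMass / selbergSum s ≤ N / (D.totient * Real.log R) := by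
    have hS : Real.log R ≤ D / D.totient * selbergSum s := by
      simpa only [selbergSum, s, selbergDivisors_progressionSieve, selbergTerms_progressionSieve]
        using log_le_mul_sum_inv_totient hD R
    change N / D / selbergSum s ≤ _
    rw [div_mul_eq_mul_div, le_div_iff₀' hφ] at hS
    rw [div_div]
    gcongr
  have herr : ∑ d ∈ selbergDivisors s, (s.nu d)⁻¹ ≤ (R : ℝ) ^ 2 := by
    change ∑ d ∈ selbergDivisors s, ((d : ℝ)⁻¹)⁻¹ ≤ _
    simp only [s, selbergDivisors_progressionSieve, inv_inv]
    calc ∑ d ∈ squarefreeCoprime D R, (d : ℝ) ≤ #(squarefreeCoprime D R) • (R : ℝ) :=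
          sum_le_card_nsmul _ _ _ fun d hd =>
            Nat.cast_le.2 (mem_Icc.1 (mem_filter.1 hd).1).2
      _ ≤ R • (R : ℝ) := by
          gcongr
          simpa [squarefreeCoprime] using card_filter_le (Icc 1 R) _
      _ = (R : ℝ) ^ 2 := by rw [nsmul_eq_mul, sq]
  have hν : 0 ≤ ∑ d ∈ selbergDivisors s, (s.nu d)⁻¹ :=
    sum_nonneg fun d _ => inv_nonneg.2 (inv_nonneg.2 d.cast_nonneg)
  calc (#{p ∈ Ioc R N | p.Prime ∧ p ≡ a [MOD D]} : ℝ) ≤ s.siftedSum := card_primes_le_siftedSum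
    _ ≤ s.totalMass / selbergSum s + 1 * (∑ d ∈ selbergDivisors s, (s.nu d)⁻¹) ^ 2 :=
        siftedSum_le_totalMass_div_selbergSum fun d => abs_rem_progressionSieve_le_one hD
    _ ≤ N / (D.totient * Real.log R) + 1 * ((R : ℝ) ^ 2) ^ 2 := by gcongr
    _ = _ := by ring

end PrimesInProgressions

section Mertens

open Finset
open ArithmeticFunction
open scoped ArithmeticFunction.zeta

lemma log_log_le_sum_primesLE_inv_sub_one {n : ℕ} (hn : 2 ≤ n) :
    Real.log (Real.log n) ≤ ∑ p ∈ n.primesLE, ((p : ℝ) - 1)⁻¹ := by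
  have hlog : 0 < Real.log n := Real.log_pos (by exact_mod_cast hn)
  have hfactor : ∀ p ∈ n.primesLE, 0 < 1 - (p : ℝ)⁻¹ := fun p hp =>
    sub_pos.2 (inv_lt_one_of_one_lt₀ (Nat.one_lt_cast.2 (Nat.prime_of_mem_primesLE hp).one_lt))
  have hprod : Real.log n ≤ ∏ p ∈ n.primesLE, (1 - (p : ℝ)⁻¹)⁻¹ := by
    rw [← primeFactors_primorial, prod_primeFactors_inv_one_sub_inv (primorial_ne_zero n)]
    refine (log_le_sum_Icc_inv n).trans
      (sum_inv_le_div_totient (primorial_ne_zero n) fun m hm => ?_)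
    rw [mem_Icc] at hm
    refine ⟨by omega, fun p hp => ?_⟩
    rw [primeFactors_primorial, Nat.mem_primesLE]
    exact ⟨(Nat.le_of_mem_primeFactors hp).trans hm.2, Nat.prime_of_mem_primeFactors hp⟩
  calc Real.log (Real.log n) ≤ Real.log (∏ p ∈ n.primesLE, (1 - (p : ℝ)⁻¹)⁻¹) :=
        Real.log_le_log hlog hprod
    _ = ∑ p ∈ n.primesLE, Real.log (1 - (p : ℝ)⁻¹)⁻¹ :=
        Real.log_prod fun p hp => (inv_pos.2 (hfactor p hp)).ne'
    _ ≤ ∑ p ∈ n.primesLE, ((p : ℝ) - 1)⁻¹ := by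
        refine sum_le_sum fun p hp => ?_
        have hp1 : (1 : ℝ) < p := Nat.one_lt_cast.2 (Nat.prime_of_mem_primesLE hp).one_lt
        have hsub : (p : ℝ) - 1 ≠ 0 := (sub_pos.2 hp1).ne'
        calc Real.log (1 - (p : ℝ)⁻¹)⁻¹ ≤ (1 - (p : ℝ)⁻¹)⁻¹ - 1 :=
              Real.log_le_sub_one_of_pos (inv_pos.2 (hfactor p hp))
          _ = ((p : ℝ) - 1)⁻¹ := by
              have := (hfactor p hp).ne'
              field_simp
              ring

/-- By Legendre's formula this is `log n! ≤ n log n`. -/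
lemma sum_primesLE_div_mul_log_le (n : ℕ) :
    ∑ p ∈ n.primesLE, ((n / p : ℕ) : ℝ) * Real.log p ≤ n * Real.log n := by
  calc ∑ p ∈ n.primesLE, ((n / p : ℕ) : ℝ) * Real.log p
      = ∑ p ∈ n.primesLE, vonMangoldt p * ((n / p : ℕ) : ℝ) :=
        sum_congr rfl fun p hp => by
          rw [vonMangoldt_apply_prime (Nat.prime_of_mem_primesLE hp), mul_comm]
    _ ≤ ∑ k ∈ Ioc 0 n, vonMangoldt k * ((n / k : ℕ) : ℝ) := by
        refine sum_le_sum_of_subset_of_nonneg (fun p hp => ?_) fun k _ _ =>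
          mul_nonneg vonMangoldt_nonneg (Nat.cast_nonneg _)
        rw [Nat.mem_primesLE] at hp
        exact mem_Ioc.2 ⟨hp.2.pos, hp.1⟩
    _ = ∑ k ∈ Ioc 0 n, Real.log k := by
        rw [← sum_Ioc_mul_zeta_eq_sum, vonMangoldt_mul_zeta]
        rfl
    _ ≤ #(Ioc 0 n) • Real.log n := sum_le_card_nsmul _ _ _ fun k hk => by
        rw [mem_Ioc] at hk
        exact Real.log_le_log (Nat.cast_pos.2 hk.1) (Nat.cast_le.2 hk.2)
    _ = n * Real.log n := by simp

lemma sum_primesLE_log_div_le {n : ℕ} (hn : n ≠ 0) :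
    ∑ p ∈ n.primesLE, Real.log p / p ≤ Real.log n + Real.log 4 := by
  have hn0 : (0 : ℝ) < n := by exact_mod_cast hn.bot_lt
  have hθ : ∑ p ∈ n.primesLE, Real.log p ≤ Real.log 4 * n := by
    rw [← Chebyshev.theta_eq_sum_primesLE_log]
    exact Chebyshev.theta_le_log4_mul_x hn0.le
  have hterm : ∀ p ∈ n.primesLE, n * (Real.log p / p) ≤
      ((n / p : ℕ) : ℝ) * Real.log p + Real.log p := fun p _ => by
    have hfloor : (n : ℝ) / p ≤ ((n / p : ℕ) : ℝ) + 1 := by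
      simpa only [Nat.floor_div_natCast, Nat.floor_natCast] using
        (Nat.lt_floor_add_one ((n : ℝ) / p)).le
    calc (n : ℝ) * (Real.log p / p) = n / p * Real.log p := by ring
      _ ≤ (((n / p : ℕ) : ℝ) + 1) * Real.log p := by gcongr
      _ = _ := by ring
  refine le_of_mul_le_mul_left ?_ hn0
  calc n * ∑ p ∈ n.primesLE, Real.log p / p
      ≤ ∑ p ∈ n.primesLE, (((n / p : ℕ) : ℝ) * Real.log p + Real.log p) := by
        rw [mul_sum]
        exact sum_le_sum hterm
    _ ≤ n * Real.log n + Real.log 4 * n := by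
        rw [sum_add_distrib]
        exact add_le_add (sum_primesLE_div_mul_log_le n) hθ
    _ = n * (Real.log n + Real.log 4) := by ring

lemma one_sub_div_le_log_sub_log {a b : ℝ} (ha : 0 < a) (hb : 0 < b) :
    1 - a / b ≤ Real.log b - Real.log a := by
  have h := Real.one_sub_inv_le_log_of_pos (div_pos hb ha)
  rwa [inv_div, Real.log_div hb.ne' ha.ne'] at h

variable {a : ℕ → ℝ} {c : ℝ}

/-- Partial summation: the quantity
`∑ k ∈ Icc 2 n, a k / log k - (∑ k ∈ Icc 2 n, a k - c) / log n - log (log n)` is non-increasing. -/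
lemma sum_div_log_sub_le (ha : ∀ n, 2 ≤ n → ∑ k ∈ Icc 2 n, a k ≤ Real.log n + c) {n : ℕ}
    (hn : 2 ≤ n) :
    ∑ k ∈ Icc 2 n, a k / Real.log k - (∑ k ∈ Icc 2 n, a k - c) / Real.log n -
      Real.log (Real.log n) ≤ c / Real.log 2 - Real.log (Real.log 2) := by
  induction n, hn using Nat.le_induction with
  | base => simp [sub_div]
  | succ n hn ih =>
    rw [sum_Icc_succ_top (by omega), sum_Icc_succ_top (by omega)]
    set A := ∑ k ∈ Icc 2 n, a k
    have hn1 : (1 : ℝ) < n := by exact_mod_cast hn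
    set u := Real.log n
    set v := Real.log ((n + 1 : ℕ) : ℝ)
    have hu : 0 < u := Real.log_pos hn1
    have huv : u ≤ v := Real.log_le_log (by linarith) (by push_cast; linarith)
    have hv : 0 < v := hu.trans_le huv
    have hstep : (A - c) * (u⁻¹ - v⁻¹) ≤ Real.log v - Real.log u := by
      calc (A - c) * (u⁻¹ - v⁻¹) ≤ u * (u⁻¹ - v⁻¹) := by
            gcongr
            · exact sub_nonneg.2 (inv_anti₀ hu huv)
            · linarith [ha n hn]
        _ = 1 - u / v := by field_simp
        _ ≤ Real.log v - Real.log u := one_sub_div_le_log_sub_log hu hv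
    have hsplit : (A + a (n + 1) - c) / v = a (n + 1) / v + (A - c) / u -
        (A - c) * (u⁻¹ - v⁻¹) := by ring
    rw [hsplit]
    linarith

lemma sum_div_log_le (ha : ∀ n, 2 ≤ n → ∑ k ∈ Icc 2 n, a k ≤ Real.log n + c) {n : ℕ}
    (hn : 2 ≤ n) :
    ∑ k ∈ Icc 2 n, a k / Real.log k ≤
      Real.log (Real.log n) + 1 + c / Real.log 2 - Real.log (Real.log 2) := by
  have hlog : 0 < Real.log n := Real.log_pos (by exact_mod_cast hn)
  have hlast : (∑ k ∈ Icc 2 n, a k - c) / Real.log n ≤ 1 :=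
    (div_le_one hlog).2 (sub_le_iff_le_add.2 (ha n hn))
  linarith [sum_div_log_sub_le ha hn]

lemma sum_primesLE_inv_le {n : ℕ} (hn : 2 ≤ n) :
    ∑ p ∈ n.primesLE, (p : ℝ)⁻¹ ≤ Real.log (Real.log n) + 3 - Real.log (Real.log 2) := by
  have : 0 < Real.log 2 := Real.log_pos one_lt_two
  have hlog4 : Real.log 4 / Real.log 2 = 2 := by
    rw [show (4 : ℝ) = 2 ^ 2 by norm_num, Real.log_pow]
    field_simp
    norm_num
  have hsum : ∀ m : ℕ, 2 ≤ m →
      ∑ k ∈ Icc 2 m, (if k.Prime then Real.log k / k else 0) ≤ Real.log m + Real.log 4 := by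
    intro m hm
    rw [← sum_filter, ← Nat.primesLE_eq_filter_Icc_two]
    exact sum_primesLE_log_div_le (by omega)
  calc ∑ p ∈ n.primesLE, (p : ℝ)⁻¹
      = ∑ k ∈ Icc 2 n, (if k.Prime then Real.log k / k else 0) / Real.log k := by
        rw [Nat.primesLE_eq_filter_Icc_two, sum_filter]
        refine sum_congr rfl fun k hk => ?_
        have hk1 : (1 : ℝ) < k := Nat.one_lt_cast.2 (mem_Icc.1 hk).1
        have hlogk : Real.log k ≠ 0 := (Real.log_pos hk1).ne'
        split_ifs
        · field_simp
        · simp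
    _ ≤ _ := sum_div_log_le hsum hn
    _ = Real.log (Real.log n) + 3 - Real.log (Real.log 2) := by rw [hlog4]; ring

lemma sum_Icc_two_inv_sub_one_sub_inv {n : ℕ} (hn : 1 ≤ n) :
    ∑ k ∈ Icc 2 n, (((k : ℝ) - 1)⁻¹ - (k : ℝ)⁻¹) = 1 - (n : ℝ)⁻¹ := by
  induction n, hn using Nat.le_induction with
  | base => simp
  | succ n hn ih =>
    rw [sum_Icc_succ_top (by omega), ih]
    push_cast
    ring

theorem abs_sum_primesLE_inv_sub_one_sub_log_log_le {n : ℕ} (hn : 2 ≤ n) :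
    |∑ p ∈ n.primesLE, ((p : ℝ) - 1)⁻¹ - Real.log (Real.log n)| ≤
      4 - Real.log (Real.log 2) := by
  have htail : ∑ p ∈ n.primesLE, (((p : ℝ) - 1)⁻¹ - (p : ℝ)⁻¹) ≤ 1 := by
    rw [Nat.primesLE_eq_filter_Icc_two]
    calc _ ≤ ∑ k ∈ Icc 2 n, (((k : ℝ) - 1)⁻¹ - (k : ℝ)⁻¹) := by
          refine sum_le_sum_of_subset_of_nonneg (filter_subset _ _) fun k hk _ => ?_
          have hk1 : (1 : ℝ) < k := Nat.one_lt_cast.2 (mem_Icc.1 hk).1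
          exact sub_nonneg.2 (inv_anti₀ (sub_pos.2 hk1) (by linarith))
      _ = 1 - (n : ℝ)⁻¹ := sum_Icc_two_inv_sub_one_sub_inv (by omega)
      _ ≤ 1 := sub_le_self _ (by positivity)
  rw [sum_sub_distrib] at htail
  rw [abs_of_nonneg (sub_nonneg.2 (log_log_le_sum_primesLE_inv_sub_one hn))]
  linarith [sum_primesLE_inv_le hn]

end Mertens

section UniformMeasure

open Finset
open MeasureTheory ProbabilityTheory

lemma measureReal_uniformOn_univ {Ω : Type*} [Fintype Ω] [MeasurableSpace Ω]
    [MeasurableSingletonClass Ω] (s : Finset Ω) :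
    (uniformOn (Set.univ : Set Ω)).real s = #s / Fintype.card Ω := by
  rw [measureReal_def, uniformOn_univ, Measure.count_apply_finset, ENNReal.toReal_div,
    ENNReal.toReal_natCast, ENNReal.toReal_natCast]

lemma pi_uniformOn_univ {ι : Type*} [Fintype ι] {Ω : ι → Type*} [∀ i, Finite (Ω i)]
    [∀ i, MeasurableSpace (Ω i)] [∀ i, MeasurableSingletonClass (Ω i)] :
    Measure.pi (fun i => uniformOn (Set.univ : Set (Ω i))) = uniformOn Set.univ := by
  classical
  have _ (i : ι) : Fintype (Ω i) := Fintype.ofFinite (Ω i)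
  refine Measure.ext_of_singleton fun ω => ?_
  simp_rw [Measure.pi_singleton, uniformOn_univ, Measure.count_singleton, one_div,
    Fintype.card_pi, Nat.cast_prod]
  exact (ENNReal.prod_inv_distrib fun _ _ _ _ _ => Or.inr (ENNReal.natCast_ne_top _)).symm

lemma variance_indicator_one_le {Ω : Type*} [MeasurableSpace Ω] {μ : Measure Ω}
    [IsProbabilityMeasure μ] {s : Set Ω} (hs : MeasurableSet s) :
    Var[s.indicator 1; μ] ≤ μ.real s := by
  have hsq : (s.indicator 1 : Ω → ℝ) ^ 2 = s.indicator 1 := by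
    ext ω
    by_cases h : ω ∈ s <;> simp [h]
  calc Var[s.indicator 1; μ] ≤ ∫ ω, ((s.indicator 1 : Ω → ℝ) ^ 2) ω ∂μ :=
        variance_le_expectation_sq (aestronglyMeasurable_const.indicator hs)
    _ = μ.real s := by rw [hsq, integral_indicator_one hs]

/-- Chebyshev's inequality for the uniform measure on `∀ i, Ω i`, under which the coordinates are
independent. -/
theorem card_filter_le_abs_card_sub_sum_le {ι : Type*} [Fintype ι] [DecidableEq ι]
    {Ω : ι → Type*} [∀ i, Fintype (Ω i)] [∀ i, DecidableEq (Ω i)] [∀ i, Nonempty (Ω i)]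
    (A : ∀ i, Finset (Ω i)) {t : ℝ} (ht : 0 < t) :
    (#{ω : ∀ i, Ω i | t ≤ |(#{i | ω i ∈ A i} : ℝ) - ∑ i, (#(A i) : ℝ) / Fintype.card (Ω i)|} : ℝ) ≤
      (∑ i, (#(A i) : ℝ) / Fintype.card (Ω i)) / t ^ 2 * Fintype.card (∀ i, Ω i) := by
  let _ (i : ι) : MeasurableSpace (Ω i) := ⊤
  have _ (i : ι) : DiscreteMeasurableSpace (Ω i) := ⟨fun _ => trivial⟩
  let P (i : ι) : Measure (Ω i) := uniformOn Set.univ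
  let I (i : ι) : Ω i → ℝ := (A i : Set (Ω i)).indicator 1
  let X : (∀ i, Ω i) → ℝ := ∑ i, fun ω => I i (ω i)
  have hX : ∀ ω, X ω = #{i | ω i ∈ A i} := fun ω => by
    simp [X, I, Set.indicator_apply, sum_boole]
  have hmean : (Measure.pi P)[X] = ∑ i, (#(A i) : ℝ) / Fintype.card (Ω i) := by
    simp only [X, Finset.sum_apply]
    rw [integral_finsetSum _ fun i _ => Integrable.of_finite]
    refine sum_congr rfl fun i _ => ?_
    rw [integral_comp_eval (f := I i) AEStronglyMeasurable.of_discrete,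
      integral_indicator_one (A i).measurableSet, measureReal_uniformOn_univ]
  have hvar : Var[X; Measure.pi P] ≤ ∑ i, (#(A i) : ℝ) / Fintype.card (Ω i) := by
    rw [variance_sum_pi fun i => MemLp.of_discrete]
    refine sum_le_sum fun i _ => ?_
    rw [← measureReal_uniformOn_univ]
    exact variance_indicator_one_le (A i).measurableSet
  have hcheb : (Measure.pi P).real {ω | t ≤ |X ω - (Measure.pi P)[X]|} ≤
      Var[X; Measure.pi P] / t ^ 2 :=
    ENNReal.toReal_le_of_le_ofReal (div_nonneg (variance_nonneg _ _) (sq_nonneg t))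
      (meas_ge_le_variance_div_sq MemLp.of_discrete ht)
  rw [hmean] at hcheb
  simp only [hX, P, pi_uniformOn_univ] at hcheb hvar
  rw [← coe_filter_univ, measureReal_uniformOn_univ, div_le_iff₀ (by positivity)] at hcheb
  refine hcheb.trans ?_
  gcongr

end UniformMeasure

section TuranKubilius

open Finset
open scoped Function

variable {ι : Type*} [Fintype ι] {m : ι → ℕ} [∀ i, NeZero (m i)]

lemma exists_forall_natCast_eq_iff_modEq_prod (hm : Pairwise (Nat.Coprime on m))
    (ω : ∀ i, ZMod (m i)) :
    ∃ a : ℕ, ∀ n : ℕ, (∀ i, (n : ZMod (m i)) = ω i) ↔ n ≡ a [MOD ∏ i, m i] := by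
  have : NeZero (∏ i, m i) := ⟨prod_ne_zero_iff.2 fun i _ => NeZero.ne (m i)⟩
  let e := ZMod.prodEquivPi m hm
  refine ⟨(e.symm ω).val, fun n => ?_⟩
  rw [← ZMod.natCast_eq_natCast_iff, ZMod.natCast_zmod_val, RingEquiv.eq_symm_apply, map_natCast,
    funext_iff]
  rfl

lemma card_pi_units_eq_totient_prod [DecidableEq ι] (hm : Pairwise (Nat.Coprime on m)) :
    Fintype.card (∀ i, (ZMod (m i))ˣ) = (∏ i, m i).totient := by
  have : NeZero (∏ i, m i) := ⟨prod_ne_zero_iff.2 fun i _ => NeZero.ne (m i)⟩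
  rw [← ZMod.card_units_eq_totient]
  exact (Fintype.card_congr ((Units.mapEquiv (ZMod.prodEquivPi m hm).toMulEquiv).trans
    MulEquiv.piUnits).toEquiv).symm

lemma card_primes_natCast_eq_le (hm : Pairwise (Nat.Coprime on m)) (ω : ∀ i, (ZMod (m i))ˣ)
    (N : ℕ) {R : ℕ} (hR : 1 < R) :
    (#{p ∈ Ioc R N | p.Prime ∧ ∀ i, (p : ZMod (m i)) = ω i} : ℝ) ≤
      N / ((∏ i, m i).totient * Real.log R) + (R : ℝ) ^ 4 := by
  obtain ⟨a, ha⟩ := exists_forall_natCast_eq_iff_modEq_prod hm fun i => (ω i : ZMod (m i))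
  simp only [ha]
  exact card_primes_modEq_le (prod_ne_zero_iff.2 fun i _ => NeZero.ne (m i)) a N hR

/-- Chebyshev's inequality bounds the number of bad residue classes modulo `∏ i, m i`, and the
sieve bounds the number of primes in each of them. -/
theorem card_primes_le_abs_card_sub_sum_le (hm : Pairwise (Nat.Coprime on m))
    (A : ∀ i, Finset (ZMod (m i))ˣ) {N R : ℕ} (hR : 1 < R) (hmR : ∀ i, m i ≤ R) {t : ℝ}
    (ht : 0 < t) :
    (#{p ∈ Ioc R N | p.Prime ∧ t ≤ |(#{i | ∃ u ∈ A i, (u : ZMod (m i)) = p} : ℝ) -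
        ∑ i, (#(A i) : ℝ) / (m i).totient|} : ℝ) ≤
      (∑ i, (#(A i) : ℝ) / (m i).totient) / t ^ 2 *
        (N / Real.log R + (∏ i, m i).totient * (R : ℝ) ^ 4) := by
  classical
  set μ := ∑ i, (#(A i) : ℝ) / (m i).totient
  set φ := (∏ i, m i).totient
  let B : Finset (∀ i, (ZMod (m i))ˣ) := {ω | t ≤ |(#{i | ω i ∈ A i} : ℝ) - μ|}
  have hB : (#B : ℝ) ≤ μ / t ^ 2 * φ := by
    have h := card_filter_le_abs_card_sub_sum_le A ht
    simp only [ZMod.card_units_eq_totient, card_pi_units_eq_totient_prod hm] at h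
    exact h
  have hcover : {p ∈ Ioc R N | p.Prime ∧
      t ≤ |(#{i | ∃ u ∈ A i, (u : ZMod (m i)) = p} : ℝ) - μ|} ⊆
      B.biUnion fun ω => {p ∈ Ioc R N | p.Prime ∧ ∀ i, (p : ZMod (m i)) = ω i} := by
    intro p hp
    obtain ⟨hpN, hprime, hpt⟩ := mem_filter.1 hp
    have hcop : ∀ i, p.Coprime (m i) := fun i => Nat.coprime_of_lt_prime (NeZero.ne (m i))
      ((hmR i).trans_lt (mem_Ioc.1 hpN).1) hprime
    refine mem_biUnion.2 ⟨fun i => ZMod.unitOfCoprime p (hcop i), mem_filter.2 ⟨mem_univ _, ?_⟩,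
      mem_filter.2 ⟨hpN, hprime, fun i => rfl⟩⟩
    have hmem : ∀ i, ZMod.unitOfCoprime p (hcop i) ∈ A i ↔ ∃ u ∈ A i, (u : ZMod (m i)) = p :=
      fun i => ⟨fun h => ⟨_, h, rfl⟩, fun ⟨u, hu, hup⟩ => by
        rwa [← (Units.ext hup : u = ZMod.unitOfCoprime p (hcop i))]⟩
    simpa only [hmem] using hpt
  have hcard : (#(B.biUnion fun ω => {p ∈ Ioc R N | p.Prime ∧ ∀ i, (p : ZMod (m i)) = ω i}) : ℝ) ≤
      #B * (N / (φ * Real.log R) + (R : ℝ) ^ 4) := by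
    rw [← nsmul_eq_mul]
    refine (Nat.cast_le.2 card_biUnion_le).trans ?_
    rw [Nat.cast_sum]
    exact sum_le_card_nsmul _ _ _ fun ω _ => card_primes_natCast_eq_le hm ω N hR
  have hlog : 0 < Real.log R := Real.log_pos (by exact_mod_cast hR)
  have hφ : (0 : ℝ) < φ := by
    exact_mod_cast Nat.totient_pos.2 (prod_pos fun i _ => (NeZero.pos (m i)))
  calc _ ≤ (#(B.biUnion fun ω => {p ∈ Ioc R N | p.Prime ∧ ∀ i, (p : ZMod (m i)) = ω i}) : ℝ) :=
        Nat.cast_le.2 (card_le_card hcover)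
    _ ≤ #B * (N / (φ * Real.log R) + (R : ℝ) ^ 4) := hcard
    _ ≤ μ / t ^ 2 * φ * (N / (φ * Real.log R) + (R : ℝ) ^ 4) := by gcongr
    _ = μ / t ^ 2 * (N / Real.log R + φ * (R : ℝ) ^ 4) := by field_simp

end TuranKubilius

section ShiftedSquares

open Finset

variable {p q : ℕ}

lemma card_one_neg_one_units (q : ℕ) [Fact q.Prime] :
    #({1, -1} : Finset (ZMod q)ˣ) = if q = 2 then 1 else 2 := by
  split_ifs with hq
  · subst hq
    rfl
  · have : Fact (2 < q) := ⟨(Fact.out : q.Prime).two_le.lt_of_ne' hq⟩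
    exact card_pair fun h => ZMod.neg_one_ne_one (congrArg Units.val h).symm

lemma exists_unit_eq_natCast_iff_dvd_sq_sub_one [Fact q.Prime] (hp : 1 ≤ p) :
    (∃ u ∈ ({1, -1} : Finset (ZMod q)ˣ), (u : ZMod q) = p) ↔ q ∣ p ^ 2 - 1 := by
  rw [← ZMod.natCast_eq_zero_iff, Nat.cast_sub (Nat.one_le_pow _ _ hp), sub_eq_zero]
  simp [eq_comm (b := (p : ZMod q))]

lemma sum_primesLE_card_one_neg_one_div_totient {n : ℕ} (hn : 2 ≤ n) :
    ∑ q ∈ n.primesLE, (if q = 2 then 1 else 2 : ℝ) / q.totient =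
      2 * ∑ q ∈ n.primesLE, ((q : ℝ) - 1)⁻¹ - 1 := by
  have htwo : 2 ∈ n.primesLE := Nat.mem_primesLE.2 ⟨hn, Nat.prime_two⟩
  have hterm : ∀ q ∈ n.primesLE, (if q = 2 then 1 else 2 : ℝ) / q.totient =
      2 * ((q : ℝ) - 1)⁻¹ - if q = 2 then 1 else 0 := fun q hq => by
    have hprime := Nat.prime_of_mem_primesLE hq
    rw [Nat.totient_prime hprime, Nat.cast_pred hprime.pos]
    split_ifs with h
    · subst h
      norm_num
    · ring
  rw [sum_congr rfl hterm, sum_sub_distrib, ← mul_sum, sum_ite_eq' _ _ _, if_pos htwo]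

theorem card_primes_le_abs_card_dvd_sq_sub_one_sub_le {n N R : ℕ} (hn : 2 ≤ n) (hnR : n ≤ R)
    {t : ℝ} (ht : 0 < t) :
    (#{p ∈ Ioc R N | p.Prime ∧ t ≤ |(#{q ∈ n.primesLE | q ∣ p ^ 2 - 1} : ℝ) -
        (2 * ∑ q ∈ n.primesLE, ((q : ℝ) - 1)⁻¹ - 1)|} : ℝ) ≤
      (2 * ∑ q ∈ n.primesLE, ((q : ℝ) - 1)⁻¹ - 1) / t ^ 2 *
        (N / Real.log R + primorial n * (R : ℝ) ^ 4) := by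
  have _ (q : n.primesLE) : Fact (q : ℕ).Prime := ⟨Nat.prime_of_mem_primesLE q.2⟩
  have hcop : Pairwise (Function.onFun Nat.Coprime fun q : n.primesLE => (q : ℕ)) :=
    fun q r hqr => (Nat.coprime_primes Fact.out Fact.out).2 (Subtype.coe_ne_coe.2 hqr)
  have hmean : ∑ q : n.primesLE, (#({1, -1} : Finset (ZMod q)ˣ) : ℝ) / (q : ℕ).totient =
      2 * ∑ q ∈ n.primesLE, ((q : ℝ) - 1)⁻¹ - 1 := by
    simp only [card_one_neg_one_units, Nat.cast_ite, Nat.cast_one, Nat.cast_ofNat]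
    rw [← sum_primesLE_card_one_neg_one_div_totient hn]
    exact sum_coe_sort n.primesLE fun q => (if q = 2 then 1 else 2 : ℝ) / q.totient
  have hcount : ∀ p, 1 ≤ p →
      #{q : n.primesLE | ∃ u ∈ ({1, -1} : Finset (ZMod q)ˣ), (u : ZMod q) = p} =
        #{q ∈ n.primesLE | q ∣ p ^ 2 - 1} := fun p hp => by
    simp only [exists_unit_eq_natCast_iff_dvd_sq_sub_one hp, card_filter]
    exact sum_coe_sort n.primesLE fun q => if q ∣ p ^ 2 - 1 then 1 else 0
  have hmain := card_primes_le_abs_card_sub_sum_le hcop (fun q => {1, -1}) (N := N)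
    (by omega : 1 < R) (fun q => (Nat.mem_primesLE.1 q.2).1.trans hnR) ht
  rw [hmean] at hmain
  have hmean_nonneg : 0 ≤ 2 * ∑ q ∈ n.primesLE, ((q : ℝ) - 1)⁻¹ - 1 := hmean ▸ by positivity
  have htotient : (∏ q : n.primesLE, (q : ℕ)).totient ≤ primorial n :=
    (Nat.totient_le _).trans_eq (prod_coe_sort n.primesLE fun q => q)
  calc _ = _ := by
        congr 2
        exact filter_congr fun p _ => and_congr_right fun hp => by rw [hcount p hp.one_le]
    _ ≤ _ := hmain
    _ ≤ _ := by gcongr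

end ShiftedSquares

section InconvenientPrimes

open Finset

lemma omegay_eq_card_primesLE_dvd {y : ℝ} (hy : 0 ≤ y) {m : ℕ} (hm : m ≠ 0) :
    omegay y m = #{q ∈ ⌊y⌋₊.primesLE | q ∣ m} := by
  unfold omegay
  congr 1
  ext q
  rw [mem_filter, mem_filter, Nat.mem_primeFactors, Nat.mem_primesLE, Nat.le_floor_iff hy]
  tauto

lemma abs_log_log_floor_sub_log_log_le {y : ℝ} (hy : 2 ≤ y) :
    |Real.log (Real.log ⌊y⌋₊) - Real.log (Real.log y)| ≤ Real.log 2 := by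
  have htwo : (2 : ℝ) ≤ ⌊y⌋₊ := mod_cast Nat.le_floor hy
  have hfloor : (⌊y⌋₊ : ℝ) ≤ y := Nat.floor_le (by linarith)
  have hsq : y ≤ (⌊y⌋₊ : ℝ) ^ 2 := by nlinarith [Nat.lt_floor_add_one y]
  have hlog : 0 < Real.log ⌊y⌋₊ := Real.log_pos (by linarith)
  have hupper : Real.log (Real.log ⌊y⌋₊) ≤ Real.log (Real.log y) := by gcongr
  have hlower : Real.log (Real.log y) ≤ Real.log 2 + Real.log (Real.log ⌊y⌋₊) := by
    rw [← Real.log_mul two_ne_zero hlog.ne', ← Nat.cast_two, ← Real.log_pow]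
    have : 0 < Real.log y := Real.log_pos (by linarith)
    gcongr
  rw [abs_le]
  constructor <;> linarith [Real.log_pos one_lt_two]

lemma exists_abs_two_mul_sum_primesLE_sub_two_mul_log_log_le :
    ∃ C : ℝ, ∀ y : ℝ, 2 ≤ y →
      |2 * ∑ q ∈ ⌊y⌋₊.primesLE, ((q : ℝ) - 1)⁻¹ - 1 - 2 * Real.log (Real.log y)| ≤ C := by
  refine ⟨2 * (4 - Real.log (Real.log 2)) + 2 * Real.log 2 + 1, fun y hy => ?_⟩
  have hmertens := abs_le.1 (abs_sum_primesLE_inv_sub_one_sub_log_log_le (Nat.le_floor hy))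
  have hfloor := abs_le.1 (abs_log_log_floor_sub_log_log_le hy)
  rw [abs_le]
  constructor <;> linarith

/-- The primes `p ≤ x` for which `ω_y(p² - 1)` is not within a quarter of its typical size
`2 log log y`; the theorem concerns `y = log log x`. -/
def inconvenientPrimes (x y : ℝ) : Set ℕ :=
  {p : ℕ | p.Prime ∧ (p : ℝ) ≤ x ∧ (omegay y (p ^ 2 - 1) : ℝ) ∉
    Set.Icc (1.5 * Real.log (Real.log y)) (2.5 * Real.log (Real.log y))}

theorem exists_ncard_inconvenientPrimes_le :
    ∃ C : ℝ, ∀ x y : ℝ, ∀ R : ℕ, 0 ≤ x → 2 ≤ y → y ≤ R → C ≤ Real.log (Real.log y) →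
      ((inconvenientPrimes x y).ncard : ℝ) ≤
        R + 48 / Real.log (Real.log y) * (x / Real.log R + primorial ⌊y⌋₊ * (R : ℝ) ^ 4) := by
  obtain ⟨C, hC⟩ := exists_abs_two_mul_sum_primesLE_sub_two_mul_log_log_le
  refine ⟨4 * C + 1, fun x y R hx hy hyR hyC => ?_⟩
  have hmean := abs_le.1 (hC y hy)
  have hC_nonneg : 0 ≤ C := (abs_nonneg _).trans (hC y hy)
  set L := Real.log (Real.log y)
  set μ := 2 * ∑ q ∈ ⌊y⌋₊.primesLE, ((q : ℝ) - 1)⁻¹ - 1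
  have hL : 0 < L := by linarith
  have hcover : inconvenientPrimes x y ⊆ ↑(Ioc 0 R ∪ {p ∈ Ioc R ⌊x⌋₊ | p.Prime ∧
      L / 4 ≤ |(#{q ∈ ⌊y⌋₊.primesLE | q ∣ p ^ 2 - 1} : ℝ) - μ|}) := by
    rintro p ⟨hp, hpx, hpy⟩
    simp only [coe_union, Set.mem_union, mem_coe, mem_filter, mem_Ioc]
    refine (le_or_gt p R).imp (⟨hp.pos, ·⟩) fun hRp => ⟨⟨hRp, Nat.le_floor hpx⟩, hp, ?_⟩
    have hne : p ^ 2 - 1 ≠ 0 := (Nat.sub_pos_of_lt (Nat.one_lt_pow two_ne_zero hp.one_lt)).ne'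
    rw [← omegay_eq_card_primesLE_dvd (by linarith) hne]
    contrapose! hpy
    rw [abs_lt] at hpy
    constructor <;> norm_num <;> linarith
  have hturan := card_primes_le_abs_card_dvd_sq_sub_one_sub_le (N := ⌊x⌋₊) (Nat.le_floor hy)
    (Nat.floor_le_of_le hyR) (by positivity : 0 < L / 4)
  have hvariance : μ / (L / 4) ^ 2 ≤ 48 / L := by
    rw [div_le_div_iff₀ (by positivity) hL]
    nlinarith
  have : 0 ≤ Real.log R := Real.log_natCast_nonneg R
  calc ((inconvenientPrimes x y).ncard : ℝ)
      ≤ #(Ioc 0 R ∪ {p ∈ Ioc R ⌊x⌋₊ | p.Prime ∧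
          L / 4 ≤ |(#{q ∈ ⌊y⌋₊.primesLE | q ∣ p ^ 2 - 1} : ℝ) - μ|}) := by
        rw [← Set.ncard_coe_finset]
        exact Nat.cast_le.2 (Set.ncard_le_ncard hcover (finite_toSet _))
    _ ≤ R + #{p ∈ Ioc R ⌊x⌋₊ | p.Prime ∧
          L / 4 ≤ |(#{q ∈ ⌊y⌋₊.primesLE | q ∣ p ^ 2 - 1} : ℝ) - μ|} := by
        exact_mod_cast (card_union_le _ _).trans_eq (by rw [Nat.card_Ioc, Nat.sub_zero])
    _ ≤ R + 48 / L * (⌊x⌋₊ / Real.log R + primorial ⌊y⌋₊ * (R : ℝ) ^ 4) := by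
        refine add_le_add_right (hturan.trans ?_) _
        gcongr
    _ ≤ R + 48 / L * (x / Real.log R + primorial ⌊y⌋₊ * (R : ℝ) ^ 4) := by
        gcongr
        exact Nat.floor_le hx

lemma eventually_exists_pow_four_mul_log_pow_three_le :
    ∀ᶠ x : ℝ in atTop, ∃ R : ℕ, Real.log x ≤ R ∧ Real.log x / 16 ≤ Real.log R ∧
      (R : ℝ) ^ 4 * Real.log x ^ 3 ≤ x := by
  have hlog_pow := (isLittleO_log_rpow_rpow_atTop 3
    (by norm_num : (0 : ℝ) < 1 / 16)).bound one_pos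
  filter_upwards [hlog_pow, eventually_ge_atTop (Real.exp 1),
    (tendsto_rpow_atTop (by norm_num : (0 : ℝ) < 1 / 16)).eventually_ge_atTop 2]
    with x hlog_pow hx_exp hz
  have hx : 0 < x := (Real.exp_pos 1).trans_le hx_exp
  have hlog : 1 ≤ Real.log x := (Real.le_log_iff_exp_le hx).2 hx_exp
  have hlogz : Real.log (x ^ (1 / 16 : ℝ)) = Real.log x / 16 := by
    rw [Real.log_rpow hx]
    ring
  have hzx : (x ^ (1 / 16 : ℝ)) ^ 16 = x := by
    rw [← Real.rpow_mul_natCast hx.le]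
    norm_num
  set z := x ^ (1 / 16 : ℝ)
  have hlog_cube : Real.log x ^ 3 ≤ z := by
    rw [Real.norm_of_nonneg (by positivity), Real.norm_of_nonneg (by positivity),
      one_mul] at hlog_pow
    exact_mod_cast hlog_pow
  have hR_le : (⌊z ^ 2⌋₊ : ℝ) ≤ z ^ 2 := Nat.floor_le (by positivity)
  have hle_R : z ≤ ⌊z ^ 2⌋₊ := by nlinarith [Nat.lt_floor_add_one (z ^ 2)]
  refine ⟨⌊z ^ 2⌋₊, ?_, ?_, ?_⟩
  · exact (le_self_pow₀ hlog three_ne_zero).trans (hlog_cube.trans hle_R)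
  · rw [← hlogz]
    gcongr
  · calc (⌊z ^ 2⌋₊ : ℝ) ^ 4 * Real.log x ^ 3 ≤ (z ^ 2) ^ 4 * z := by gcongr
      _ = z ^ 9 := by ring
      _ ≤ z ^ 16 := pow_le_pow_right₀ (by linarith) (by norm_num)
      _ = x := hzx

lemma primorial_floor_le_log_sq {x y : ℝ} (hx : 1 < x) (hy : 0 ≤ y)
    (hyx : y ≤ Real.log (Real.log x)) : (primorial ⌊y⌋₊ : ℝ) ≤ Real.log x ^ 2 := by
  have hlog_four : Real.log 4 ≤ 2 := by
    rw [show (4 : ℝ) = 2 ^ 2 by norm_num, Real.log_pow, Nat.cast_two]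
    linarith [Real.log_two_lt_d9]
  calc (primorial ⌊y⌋₊ : ℝ) ≤ 4 ^ ⌊y⌋₊ := mod_cast primorial_le_four_pow ⌊y⌋₊
    _ = Real.exp (Real.log 4 * ⌊y⌋₊) := by
        rw [mul_comm, Real.exp_nat_mul, Real.exp_log four_pos]
    _ ≤ Real.exp (2 * Real.log (Real.log x)) := by
        have : (⌊y⌋₊ : ℝ) ≤ Real.log (Real.log x) := (Nat.floor_le hy).trans hyx
        gcongr
    _ = Real.log x ^ 2 := by
        rw [← Nat.cast_two, Real.exp_nat_mul, Real.exp_log (Real.log_pos hx)]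

lemma eventually_div_log_le_four_mul_primeCounting :
    ∀ᶠ x : ℝ in atTop, x / Real.log x ≤ 4 * (Nat.primeCounting ⌊x⌋₊ : ℝ) := by
  filter_upwards [eventually_ge_atTop 100,
    Real.isLittleO_log_id_atTop.bound (by norm_num : (0 : ℝ) < 1 / 8)] with x hx hlog_le
  have hlog : 0 < Real.log x := Real.log_pos (by linarith)
  rw [Real.norm_of_nonneg hlog.le, id, Real.norm_of_nonneg (by linarith)] at hlog_le
  have hlog_add : Real.log (x + 2) ≤ Real.log x + 1 :=
    calc Real.log (x + 2) ≤ Real.log (x * 2) := by gcongr; linarith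
      _ = Real.log x + Real.log 2 := Real.log_mul (by linarith) two_ne_zero
      _ ≤ Real.log x + 1 := by linarith [Real.log_two_lt_d9]
  have hcheb := Chebyshev.pi_ge' (by linarith : 1 < x)
  refine le_trans ?_ (mul_le_mul_of_nonneg_left hcheb zero_le_four)
  rw [← mul_div_assoc]
  gcongr
  nlinarith [Real.log_two_gt_d9]

lemma ncard_inconvenientPrimes_le_primeCounting {x : ℝ} (hx : 0 ≤ x) (y : ℝ) :
    (inconvenientPrimes x y).ncard ≤ Nat.primeCounting ⌊x⌋₊ := by
  rw [← Nat.primesLE_card_eq_primeCounting, ← Set.ncard_coe_finset]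
  refine Set.ncard_le_ncard (fun p hp => ?_) (finite_toSet _)
  exact mem_coe.2 (Nat.mem_primesLE.2 ⟨(Nat.le_floor_iff hx).2 hp.2.1, hp.1⟩)

lemma sieve_bound_le {x L P : ℝ} {R : ℕ} (hx : 1 ≤ Real.log x) (hL : 0 < L)
    (hLx : L ≤ Real.log x) (hP : P ≤ Real.log x ^ 2) (hRlog : Real.log x ≤ R)
    (hlogR : Real.log x / 16 ≤ Real.log R) (hRpow : (R : ℝ) ^ 4 * Real.log x ^ 3 ≤ x) :
    R + 48 / L * (x / Real.log R + P * (R : ℝ) ^ 4) ≤ 817 * (x / Real.log x) / L := by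
  have hlog : 0 < Real.log x := by linarith
  have hx_nonneg : 0 ≤ x := le_trans (by positivity) hRpow
  have hlevel : (R : ℝ) ≤ x / Real.log x / L := by
    rw [le_div_iff₀ hL, le_div_iff₀ hlog]
    calc (R : ℝ) * L * Real.log x ≤ R * Real.log x * Real.log x := by gcongr
      _ = (R : ℝ) * Real.log x ^ 2 := by ring
      _ ≤ (R : ℝ) ^ 4 * Real.log x ^ 3 := by
          gcongr
          exacts [le_self_pow₀ (hx.trans hRlog) four_ne_zero, by norm_num]
      _ ≤ x := hRpow
  have hmain : x / Real.log R ≤ 16 * (x / Real.log x) :=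
    calc x / Real.log R ≤ x / (Real.log x / 16) := by gcongr
      _ = 16 * (x / Real.log x) := by field_simp
  have herror : P * (R : ℝ) ^ 4 ≤ x / Real.log x := by
    rw [le_div_iff₀ hlog]
    calc P * (R : ℝ) ^ 4 * Real.log x ≤ Real.log x ^ 2 * (R : ℝ) ^ 4 * Real.log x := by gcongr
      _ = (R : ℝ) ^ 4 * Real.log x ^ 3 := by ring
      _ ≤ x := hRpow
  calc R + 48 / L * (x / Real.log R + P * (R : ℝ) ^ 4)
      ≤ x / Real.log x / L + 48 / L * (16 * (x / Real.log x) + x / Real.log x) := by gcongr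
    _ = 817 * (x / Real.log x) / L := by ring

theorem exists_eventually_forall_ncard_inconvenientPrimes_le :
    ∃ C : ℝ, 0 < C ∧ ∀ᶠ x : ℝ in atTop, ∀ y : ℝ, Real.exp 1 < y → y ≤ Real.log (Real.log x) →
      ((inconvenientPrimes x y).ncard : ℝ) ≤
        C * Nat.primeCounting ⌊x⌋₊ / Real.log (Real.log y) := by
  obtain ⟨C, hC⟩ := exists_ncard_inconvenientPrimes_le
  refine ⟨max C 3268, by positivity, ?_⟩
  filter_upwards [eventually_ge_atTop (Real.exp 1),
    eventually_exists_pow_four_mul_log_pow_three_le,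
    eventually_div_log_le_four_mul_primeCounting]
    with x hx ⟨R, hRlog, hlogR, hRpow⟩ hpi y hy hyx
  have hx_pos : 0 < x := (Real.exp_pos 1).trans_le hx
  have hlog : 1 ≤ Real.log x := (Real.le_log_iff_exp_le hx_pos).2 hx
  have hy_two : 2 ≤ y := by linarith [Real.exp_one_gt_d9]
  have hL : 0 < Real.log (Real.log y) :=
    Real.log_pos ((Real.lt_log_iff_exp_lt (by linarith)).2 hy)
  have hylog : y ≤ Real.log x := hyx.trans (Real.log_le_self (by linarith))
  have hLlog : Real.log (Real.log y) ≤ Real.log x :=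
    (Real.log_le_self (Real.log_nonneg (by linarith))).trans
      ((Real.log_le_self (by linarith)).trans hylog)
  have hprimorial := primorial_floor_le_log_sq (by linarith [Real.add_one_le_exp 1])
    (by linarith) hyx
  have hbound := hC x y R hx_pos.le hy_two (hylog.trans hRlog)
  set L := Real.log (Real.log y)
  rcases le_total L C with hLC | hLC
  · rw [le_div_iff₀ hL, mul_comm]
    gcongr
    · exact hLC.trans (le_max_left C _)
    · exact ncard_inconvenientPrimes_le_primeCounting hx_pos.le y
  · calc ((inconvenientPrimes x y).ncard : ℝ)
        ≤ R + 48 / L * (x / Real.log R + primorial ⌊y⌋₊ * (R : ℝ) ^ 4) := hbound hLC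
      _ ≤ 817 * (x / Real.log x) / L :=
          sieve_bound_le hlog hL hLlog hprimorial hRlog hlogR hRpow
      _ ≤ 817 * (4 * Nat.primeCounting ⌊x⌋₊) / L := by gcongr
      _ = 3268 * Nat.primeCounting ⌊x⌋₊ / L := by ring
      _ ≤ max C 3268 * Nat.primeCounting ⌊x⌋₊ / L := by
          gcongr
          exact le_max_right C _

lemma tendsto_log_log_atTop : Tendsto (fun x : ℝ => Real.log (Real.log x)) atTop atTop :=
  Real.tendsto_log_atTop.comp Real.tendsto_log_atTop

end InconvenientPrimes

theorem type3_inconvenient_primes :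
    (∃ C : ℝ, 0 < C ∧ ∀ᶠ x : ℝ in atTop,
      ({p : ℕ | p.Prime ∧ (p : ℝ) ≤ x ∧
          (omegay (Real.log (Real.log x)) (p ^ 2 - 1) : ℝ) ∉
            Set.Icc (1.5 * Real.log (Real.log (Real.log (Real.log x))))
              (2.5 * Real.log (Real.log (Real.log (Real.log x))))}.ncard : ℝ) ≤
        C * (Nat.primeCounting ⌊x⌋₊ : ℝ) / Real.log (Real.log (Real.log (Real.log x)))) ∧
    Tendsto (fun x : ℝ =>
      ({p : ℕ | p.Prime ∧ (p : ℝ) ≤ x ∧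
          (omegay (Real.log (Real.log x)) (p ^ 2 - 1) : ℝ) ∉
            Set.Icc (1.5 * Real.log (Real.log (Real.log (Real.log x))))
              (2.5 * Real.log (Real.log (Real.log (Real.log x))))}.ncard : ℝ) /
        (Nat.primeCounting ⌊x⌋₊ : ℝ)) atTop (𝓝 0) := by
  obtain ⟨C, hC_pos, hC⟩ := exists_eventually_forall_ncard_inconvenientPrimes_le
  have hbound : ∀ᶠ x : ℝ in atTop, ((inconvenientPrimes x (Real.log (Real.log x))).ncard : ℝ) ≤
      C * Nat.primeCounting ⌊x⌋₊ / Real.log (Real.log (Real.log (Real.log x))) := by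
    filter_upwards [hC, tendsto_log_log_atTop.eventually_gt_atTop (Real.exp 1)] with x hx hy
    exact hx _ hy le_rfl
  refine ⟨⟨C, hC_pos, hbound⟩, squeeze_zero' (.of_forall fun x => by positivity) ?_
    ((tendsto_log_log_atTop.comp tendsto_log_log_atTop).const_div_atTop C)⟩
  filter_upwards [hbound, eventually_ge_atTop 2] with x hx htwo
  have hpi : (0 : ℝ) < Nat.primeCounting ⌊x⌋₊ := by
    rw [Nat.cast_pos, Nat.pos_iff_ne_zero, Ne, Nat.primeCounting_eq_zero_iff, not_le]
    exact Nat.le_floor htwo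
  rw [div_le_iff₀ hpi, div_mul_eq_mul_div]
  exact hx
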